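/- For every real ε > 0 there exist constants C1 and C2, with C1 ≤ 2^(c/ε) for an absolute constant c and C2 depending only on ε, such that: for every finite undirected unweighted simple graph G on n vertices and every subset U of its vertices, there is a subgraph H ⊆ G with at most C1 · n edges such that for every pair u, u' ∈ U connected in G, dist_H(u,u') ≤ dist_G(u,u') + C2 · |U|^(3/2) · n^ε. -/

import Mathlib

/-!
Perturbing the edge weights makes shortest paths unique, so that geodesics form a consistent system:
two of them meet in a common subpath.  Hence a vertex where two of `p` geodesics branch is counted
at most twice per pair of geodesics, and Cauchy–Schwarz bounds the number of edges in the union of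
these geodesics inside a set `X` by a multiple of `max |X| p²`.

Every vertex has a radius at least `|U|^(3/2)` and at most `n^ε` times as large at which quadrupling
the radius enlarges the ball by a bounded factor only.  A Vitali covering turns these balls into
clusters whose total size is `O(n)`.  Each cluster may spend as many edges as it has vertices, hence
may preserve all geodesics between pairs from a family of square root size.

* A light cluster, with at most `|U|²` vertices, has a thin sphere around it by averaging over the
  radii.  It preserves the geodesics between any two vertices of that sphere, and therefore every
  geodesic crossing the cluster between two far ends.
* A heavy cluster preserves the geodesics of up to `|U|` demand pairs touching it.  Greedily, a pair
  is demanded if, for each cluster it touches, one of its ends belongs to no demanded pair touching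
  that cluster.  A pair not demanded then touches a cluster which both its ends can reach along
  geodesics of demanded pairs.

An edge of a part of a demanded geodesic is thus lost only in a cluster near one end of that part,
so that two detours through cluster centers repair it.  Only for `ε ≥ 1` must the number of edges be
close to `n`, and there a spanning forest suffices.
-/

namespace SubsetSpanner

open Finset SimpleGraph

section LightestWalks

variable {V : Type*} {G : SimpleGraph V} {u v x y : V}

/-- The total weight of a walk, its edges being weighted by `w`. -/
def walkWeight (w : Sym2 V → ℕ) (p : G.Walk u v) : ℕ := (p.edges.map w).sum

/-- `p` is a weighted shortest path: no walk with the same ends weighs less. -/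
def IsLightest (w : Sym2 V → ℕ) (p : G.Walk u v) : Prop :=
  ∀ q : G.Walk u v, walkWeight w p ≤ walkWeight w q

variable {w : Sym2 V → ℕ}

lemma walkWeight_append (p : G.Walk u v) (q : G.Walk v x) :
    walkWeight w (p.append q) = walkWeight w p + walkWeight w q := by
  simp [walkWeight]

lemma walkWeight_reverse (p : G.Walk u v) : walkWeight w p.reverse = walkWeight w p := by
  simp [walkWeight, List.sum_reverse]

lemma IsLightest.reverse {p : G.Walk u v} (hp : IsLightest w p) : IsLightest w p.reverse :=
  fun q ↦ by simpa only [walkWeight_reverse] using hp q.reverse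

lemma exists_isLightest (w : Sym2 V → ℕ) (h : G.Reachable u v) :
    ∃ p : G.Walk u v, IsLightest w p :=
  have : Nonempty (G.Walk u v) := h
  ⟨Function.argmin (walkWeight w), fun q ↦ Function.argmin_le (walkWeight w) q⟩

lemma IsLightest.replace_middle {p : G.Walk u x} {q q' : G.Walk x y} {r : G.Walk y v}
    (h : IsLightest w (p.append (q.append r))) (hq' : IsLightest w q') :
    IsLightest w (p.append (q'.append r)) := fun s ↦ by
  have hs := h s
  have hq := hq' q
  simp only [walkWeight_append] at hs ⊢
  lia

lemma IsLightest.exists_mem_support {p : G.Walk u v} {q : G.Walk x y} (hp : IsLightest w p)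
    (hx : x ∈ p.support) (hy : y ∈ p.support) (hq : IsLightest w q) :
    ∃ p' : G.Walk u v, IsLightest w p' ∧ q.support ⊆ p'.support := by
  classical
  rw [← p.take_spec hx, Walk.mem_support_append_iff] at hy
  obtain hy | hy := hy
  · refine ⟨((p.takeUntil x hx).takeUntil y hy).append (q.reverse.append (p.dropUntil x hx)),
      IsLightest.replace_middle (q := (p.takeUntil x hx).dropUntil y hy) ?_ hq.reverse, ?_⟩
    · rwa [Walk.append_assoc, Walk.take_spec, Walk.take_spec]
    · intro z hz
      simp [Walk.mem_support_append_iff, hz]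
  · refine ⟨(p.takeUntil x hx).append (q.append ((p.dropUntil x hx).dropUntil y hy)),
      IsLightest.replace_middle (q := (p.dropUntil x hx).takeUntil y hy) ?_ hq, ?_⟩
    · rwa [Walk.take_spec, Walk.take_spec]
    · intro z hz
      simp [Walk.mem_support_append_iff, hz]

end LightestWalks

section TieBreaking

lemma exists_injective_sum (α : Type*) [Finite α] :
    ∃ f : α → ℕ, Function.Injective fun s : Finset α ↦ ∑ a ∈ s, f a := by
  obtain ⟨e⟩ := Finite.exists_equiv_fin α |>.choose_spec
  refine ⟨fun a ↦ 2 ^ (e a : ℕ), fun s t hst ↦ ?_⟩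
  let i : α ↪ ℕ := e.toEmbedding.trans Fin.valEmbedding
  have hsum (s : Finset α) : ∑ k ∈ s.map i, 2 ^ k = ∑ a ∈ s, 2 ^ (e a : ℕ) := by
    simp [i]
  exact Finset.map_injective i (Finset.geomSum_injective le_rfl (by simpa only [hsum] using hst))

variable {V : Type*} {G : SimpleGraph V} {u v : V}

/-- A weight for which lightest walks are shortest and are determined, as sets of vertices, by
their ends. -/
structure IsTieBreaking (G : SimpleGraph V) (w : Sym2 V → ℕ) : Prop where
  length_eq {u v : V} {p : G.Walk u v} : IsLightest w p → p.length = G.dist u v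
  support_subset {u v : V} {p q : G.Walk u v} :
    IsLightest w p → IsLightest w q → p.support ⊆ q.support

lemma exists_isTieBreaking [Finite V] (G : SimpleGraph V) : ∃ w, IsTieBreaking G w := by
  classical
  have := Fintype.ofFinite V
  obtain ⟨f, hf⟩ := exists_injective_sum (Sym2 V)
  -- The perturbation `f` never outweighs an edge and distinguishes any two sets of edges.
  let B := ∑ e, f e + 1
  let w : Sym2 V → ℕ := fun e ↦ B + f e
  have weight_eq {u v : V} (p : G.Walk u v) :
      walkWeight w p = B * p.length + (p.edges.map f).sum := by
    simp only [walkWeight, w, List.sum_map_add, List.map_const', List.sum_replicate,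
      Walk.length_edges, smul_eq_mul, mul_comm]
  have sum_edges_eq {u v : V} {p : G.Walk u v} (hp : p.length = G.dist u v) :
      (p.edges.map f).sum = ∑ e ∈ p.edges.toFinset, f e :=
    (List.sum_toFinset f (p.isPath_of_length_eq_dist hp).isTrail.edges_nodup).symm
  have length_eq {u v : V} {p : G.Walk u v} (hp : IsLightest w p) : p.length = G.dist u v := by
    obtain ⟨q, hq⟩ := p.reachable.exists_walk_length_eq_dist
    have hqB : ∑ e ∈ q.edges.toFinset, f e < B :=
      Nat.lt_succ_of_le (sum_le_univ_sum_of_nonneg fun _ ↦ Nat.zero_le _)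
    have hpq := hp q
    rw [weight_eq, weight_eq, sum_edges_eq hq, hq] at hpq
    refine le_antisymm (Nat.lt_succ_iff.1 (lt_of_mul_lt_mul_left' (a := B) ?_)) (dist_le p)
    lia
  refine ⟨w, length_eq, fun {u v p q} hp hq z hz ↦ ?_⟩
  have hedges : p.edges.toFinset = q.edges.toFinset := by
    apply hf
    have hpq := le_antisymm (hp q) (hq p)
    rw [weight_eq, weight_eq, length_eq hp, length_eq hq, Nat.add_left_cancel_iff,
      sum_edges_eq (length_eq hp), sum_edges_eq (length_eq hq)] at hpq
    exact hpq
  rw [Walk.mem_support_iff_exists_mem_edges] at hz ⊢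
  simpa only [← List.mem_toFinset (l := q.edges), ← hedges, List.mem_toFinset] using hz

end TieBreaking

section GeodesicSystem

variable {V : Type*} {G : SimpleGraph V} {I : V → V → Set V} {u v x y z : V}

lemma dist_getVert {p : G.Walk u v} (hp : p.length = G.dist u v) {n : ℕ} (hn : n ≤ p.length) :
    G.dist u (p.getVert n) = n := by
  rw [← length_eq_dist_of_subwalk hp (p.isSubwalk_take n), Walk.take_length, min_eq_left hn]

/-- A consistent choice of geodesics: `I u v` is the vertex set of the chosen shortest path between
`u` and `v` (empty if there is none), and the geodesic between two vertices of a chosen geodesic is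
a part of it. -/
structure IsGeodesicSystem (G : SimpleGraph V) (I : V → V → Set V) : Prop where
  reachable_of_mem {u v x : V} : x ∈ I u v → G.Reachable u v
  exists_walk {u v : V} : G.Reachable u v →
    ∃ p : G.Walk u v, p.length = G.dist u v ∧ I u v = {x | x ∈ p.support}
  subset {u v x y : V} : x ∈ I u v → y ∈ I u v → I x y ⊆ I u v

lemma exists_isGeodesicSystem [Finite V] (G : SimpleGraph V) : ∃ I, IsGeodesicSystem G I := by
  obtain ⟨w, hw⟩ := exists_isTieBreaking G
  refine ⟨fun u v ↦ {x | ∃ p : G.Walk u v, IsLightest w p ∧ x ∈ p.support}, ?_, ?_, ?_⟩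
  · rintro u v x ⟨p, -, -⟩
    exact p.reachable
  · intro u v h
    obtain ⟨p, hp⟩ := exists_isLightest w h
    exact ⟨p, hw.length_eq hp, Set.ext fun x ↦
      ⟨fun ⟨q, hq, hx⟩ ↦ hw.support_subset hq hp hx, fun hx ↦ ⟨p, hp, hx⟩⟩⟩
  · rintro u v x y ⟨p, hp, hx⟩ ⟨p', hp', hy⟩ z ⟨q, hq, hz⟩
    obtain ⟨p'', hp'', hsub⟩ := hp.exists_mem_support hx (hw.support_subset hp' hp hy) hq
    exact ⟨p'', hp'', hsub hz⟩

namespace IsGeodesicSystem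

lemma exists_walk_of_mem (hI : IsGeodesicSystem G I) (hx : x ∈ I u v) :
    ∃ p : G.Walk u v, p.length = G.dist u v ∧ I u v = {x | x ∈ p.support} :=
  hI.exists_walk (hI.reachable_of_mem hx)

lemma left_mem (hI : IsGeodesicSystem G I) (h : G.Reachable u v) : u ∈ I u v := by
  obtain ⟨p, -, hp⟩ := hI.exists_walk h
  simp [hp]

lemma right_mem (hI : IsGeodesicSystem G I) (h : G.Reachable u v) : v ∈ I u v := by
  obtain ⟨p, -, hp⟩ := hI.exists_walk h
  simp [hp]

lemma dist_add_dist (hI : IsGeodesicSystem G I) (hx : x ∈ I u v) :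
    G.dist u x + G.dist x v = G.dist u v := by
  classical
  obtain ⟨p, hlen, hp⟩ := hI.exists_walk_of_mem hx
  replace hx : x ∈ p.support := by rwa [hp] at hx
  have hsum : (p.takeUntil x hx).length + (p.dropUntil x hx).length = p.length := by
    rw [← Walk.length_append, Walk.take_spec]
  rw [← length_eq_dist_of_subwalk hlen (p.isSubwalk_takeUntil hx),
    ← length_eq_dist_of_subwalk hlen (p.isSubwalk_dropUntil hx), hsum, hlen]

lemma injOn_dist (hI : IsGeodesicSystem G I) : Set.InjOn (G.dist u) (I u v) := by
  intro x hx y hy hxy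
  obtain ⟨p, hlen, hp⟩ := hI.exists_walk_of_mem hx
  rw [hp] at hx hy
  obtain ⟨m, rfl, hm⟩ := Walk.mem_support_iff_exists_getVert.1 hx
  obtain ⟨n, rfl, hn⟩ := Walk.mem_support_iff_exists_getVert.1 hy
  rw [dist_getVert hlen hm, dist_getVert hlen hn] at hxy
  rw [hxy]

lemma exists_mem_dist_eq (hI : IsGeodesicSystem G I) (h : G.Reachable u v) {n : ℕ}
    (hn : n ≤ G.dist u v) : ∃ x ∈ I u v, G.dist u x = n := by
  obtain ⟨p, hlen, hp⟩ := hI.exists_walk h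
  exact ⟨p.getVert n, hp ▸ p.getVert_mem_support n, dist_getVert hlen (hlen ▸ hn)⟩

lemma reachable_left (hI : IsGeodesicSystem G I) (hx : x ∈ I u v) : G.Reachable u x := by
  classical
  obtain ⟨p, -, hp⟩ := hI.exists_walk_of_mem hx
  exact ⟨p.takeUntil x (by rwa [hp] at hx)⟩

lemma reachable (hI : IsGeodesicSystem G I) (hx : x ∈ I u v) (hy : y ∈ I u v) : G.Reachable x y :=
  (hI.reachable_left hx).symm.trans (hI.reachable_left hy)

lemma edist_add_edist (hI : IsGeodesicSystem G I) (hx : x ∈ I u v) :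
    G.edist u x + G.edist x v = G.edist u v := by
  have hux := hI.reachable_left hx
  rw [← hux.coe_dist_eq_edist, ← (hux.symm.trans (hI.reachable_of_mem hx)).coe_dist_eq_edist,
    ← (hI.reachable_of_mem hx).coe_dist_eq_edist]
  exact_mod_cast hI.dist_add_dist hx

lemma symm (hI : IsGeodesicSystem G I) (u v : V) : I u v = I v u := by
  suffices h : ∀ u v, I u v ⊆ I v u from (h u v).antisymm (h v u)
  intro u v x hx
  have h := (hI.reachable_of_mem hx).symm
  exact hI.subset (hI.right_mem h) (hI.left_mem h) hx

lemma mem_left_of_dist_le (hI : IsGeodesicSystem G I) (hx : x ∈ I u v) (hy : y ∈ I u v)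
    (hxy : G.dist u x ≤ G.dist u y) : x ∈ I u y := by
  obtain ⟨x', hx', hdist⟩ := hI.exists_mem_dist_eq (hI.reachable_left hy) hxy
  have hsub : I u y ⊆ I u v := hI.subset (hI.left_mem (hI.reachable_of_mem hy)) hy
  rwa [← hI.injOn_dist (hsub hx') hx hdist]

lemma mem_of_dist_le (hI : IsGeodesicSystem G I) (hx : x ∈ I u v) (hy : y ∈ I u v)
    (hz : z ∈ I u v) (hxz : G.dist u x ≤ G.dist u z) (hzy : G.dist u z ≤ G.dist u y) :
    z ∈ I x y := by
  have hxu := hI.mem_left_of_dist_le hx hy (hxz.trans hzy)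
  have hzu := hI.mem_left_of_dist_le hz hy hzy
  have hdist : G.dist y z ≤ G.dist y x := by
    have hx' := hI.dist_add_dist hxu
    have hz' := hI.dist_add_dist hzu
    rw [G.dist_comm, G.dist_comm (u := y)]
    lia
  rw [hI.symm] at hxu hzu ⊢
  exact hI.mem_left_of_dist_le hzu hxu hdist

end IsGeodesicSystem

end GeodesicSystem

section Counting

lemma exists_irredundant_cover {ι α : Type*} (P : Finset ι) (r : ι → α → Prop) :
    ∃ T ⊆ P, (∀ i ∈ P, ∀ y, r i y → ∃ j ∈ T, r j y) ∧
      ∀ j ∈ T, ∃ y, r j y ∧ ∀ i ∈ T, r i y → i = j := by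
  classical
  obtain ⟨T, hTP, hT⟩ := exists_minimal_le_of_wellFoundedLT
    (fun T : Finset ι ↦ ∀ i ∈ P, ∀ y, r i y → ∃ j ∈ T, r j y) P fun i hi y hy ↦ ⟨i, hi, hy⟩
  refine ⟨T, hTP, hT.prop, fun j hj ↦ ?_⟩
  by_contra! h
  refine notMem_erase j T (hT.le_of_le (fun i hi y hy ↦ ?_) (erase_subset j T) hj)
  obtain ⟨k, hk, hky⟩ := hT.prop i hi y hy
  obtain rfl | hkj := eq_or_ne k j
  · obtain ⟨i', hi', hi'y, hne⟩ := h y hky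
    exact ⟨i', mem_erase.2 ⟨hne, hi'⟩, hi'y⟩
  · exact ⟨k, mem_erase.2 ⟨hkj, hk⟩, hky⟩

lemma sum_card_le_two_mul_max {ι α : Type*} [DecidableEq ι] (P : Finset ι)
    (X : Finset α) (T : α → Finset ι) (hTP : ∀ x ∈ X, T x ⊆ P)
    (hpair : ∀ i ∈ P, ∀ j ∈ P, i ≠ j → #{x ∈ X | i ∈ T x ∧ j ∈ T x} ≤ 2) :
    ∑ x ∈ X, #(T x) ≤ 2 * max #X (#P ^ 2) := by
  have hoff : ∑ x ∈ X, #(T x).offDiag ≤ 2 * #P ^ 2 := calc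
    _ = ∑ x ∈ X, #{ij ∈ P.offDiag | ij.1 ∈ T x ∧ ij.2 ∈ T x} := by
      refine sum_congr rfl fun x hx ↦ congrArg card (ext fun ij ↦ ?_)
      have := @hTP x hx
      simp only [mem_offDiag, mem_filter]
      tauto
    _ = ∑ ij ∈ P.offDiag, #{x ∈ X | ij.1 ∈ T x ∧ ij.2 ∈ T x} :=
      sum_card_bipartiteAbove_eq_sum_card_bipartiteBelow _
    _ ≤ #P.offDiag * 2 := sum_le_card_nsmul _ _ _ fun ij hij ↦ by
      obtain ⟨hi, hj, hne⟩ := mem_offDiag.1 hij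
      exact hpair _ hi _ hj hne
    _ ≤ 2 * #P ^ 2 := by rw [offDiag_card]; lia
  have hsq : ∑ x ∈ X, #(T x) ^ 2 = ∑ x ∈ X, #(T x).offDiag + ∑ x ∈ X, #(T x) := by
    rw [← sum_add_distrib]
    refine sum_congr rfl fun x _ ↦ ?_
    rw [offDiag_card, sq, Nat.sub_add_cancel (Nat.le_mul_self _)]
  set M := max #X (#P ^ 2)
  set S := ∑ x ∈ X, #(T x)
  have hS : S ^ 2 ≤ M * (2 * M + S) := calc
    S ^ 2 ≤ #X * ∑ x ∈ X, #(T x) ^ 2 := sq_sum_le_card_mul_sum_sq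
    _ ≤ M * (2 * M + S) := by
      rw [hsq]
      gcongr
      · exact le_max_left _ _
      · exact hoff.trans (Nat.mul_le_mul_left 2 (le_max_right _ _))
  by_contra! hc
  nlinarith

variable {V : Type*} {G : SimpleGraph V} {I : V → V → Set V}

/-- The union of the geodesics `I a b`, `(a, b) ∈ P`, restricted to the vertices in `X`. -/
def geodesicGraph (G : SimpleGraph V) (I : V → V → Set V) (P : Finset (V × V)) (X : Finset V) :
    SimpleGraph V where
  Adj x y := x ∈ X ∧ y ∈ X ∧ ∃ i ∈ P, x ∈ I i.1 i.2 ∧ y ∈ I i.1 i.2 ∧ G.Adj x y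
  symm := ⟨fun _ _ ⟨hx, hy, i, hi, hxi, hyi, h⟩ ↦ ⟨hy, hx, i, hi, hyi, hxi, h.symm⟩⟩
  loopless := ⟨fun _ ⟨_, _, _, _, _, _, h⟩ ↦ h.ne rfl⟩

lemma geodesicGraph_le (P : Finset (V × V)) (X : Finset V) : geodesicGraph G I P X ≤ G :=
  fun _ _ ⟨_, _, _, _, _, _, h⟩ ↦ h

namespace IsGeodesicSystem

open scoped Classical in
lemma card_neighbors_le_two [Fintype V] (hI : IsGeodesicSystem G I) {u v x : V} (hx : x ∈ I u v) :
    #{y | G.Adj x y ∧ y ∈ I u v} ≤ 2 := by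
  refine (card_le_card_of_injOn (t := {G.dist u x - 1, G.dist u x + 1}) (G.dist u)
    (fun y hy ↦ ?_) fun y hy z hz ↦ ?_).trans card_le_two
  · simp only [coe_filter, mem_univ, true_and, Set.mem_ofPred_eq] at hy
    have hne : G.dist u x ≠ G.dist u y := fun h ↦ hy.1.ne (hI.injOn_dist hx hy.2 h)
    have := hy.1.diff_dist_adj (u := u)
    simp only [coe_insert, coe_singleton, Set.mem_insert_iff, Set.mem_singleton_iff]
    lia
  · simp only [coe_filter, mem_univ, true_and, Set.mem_ofPred_eq] at hy hz
    exact hI.injOn_dist hy.2 hz.2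

open scoped Classical in
lemma card_branch_le_two [Fintype V] (hI : IsGeodesicSystem G I) (u v a b : V) :
    #{x | x ∈ I u v ∧ x ∈ I a b ∧ ∃ y ∈ I a b, G.Adj x y ∧ y ∉ I u v} ≤ 2 := by
  obtain h | h := (filter (fun x ↦ x ∈ I u v ∧ x ∈ I a b) univ).eq_empty_or_nonempty
  · refine (card_eq_zero.2 (subset_empty.1 ?_)).trans_le zero_le_two
    rw [← h]
    exact monotone_filter_right _ fun x _ hx ↦ ⟨hx.1, hx.2.1⟩
  -- The common vertices form a subpath of both geodesics; branching happens at its ends.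
  obtain ⟨x₀, hx₀, hmin⟩ := exists_min_image _ (G.dist a) h
  obtain ⟨x₁, hx₁, hmax⟩ := exists_max_image _ (G.dist a) h
  simp only [mem_filter, mem_univ, true_and] at hx₀ hx₁ hmin hmax
  refine (card_le_card fun x hx ↦ ?_).trans (card_le_two (a := x₀) (b := x₁))
  simp only [mem_filter, mem_univ, true_and, mem_insert, mem_singleton] at hx ⊢
  obtain ⟨hxI, hxI', y, hyI, hxy, hyI'⟩ := hx
  by_contra! hne
  have h₀ := (hI.injOn_dist.ne_iff hxI' hx₀.2).2 hne.1
  have h₁ := (hI.injOn_dist.ne_iff hxI' hx₁.2).2 hne.2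
  have h₀' := hmin x ⟨hxI, hxI'⟩
  have h₁' := hmax x ⟨hxI, hxI'⟩
  have hdist := hxy.diff_dist_adj (u := a)
  exact hyI' (hI.subset hx₀.1 hx₁.1
    (hI.mem_of_dist_le hx₀.2 hx₁.2 hyI (by lia) (by lia)))

open scoped Classical in
lemma exists_card_neighbors_le [Fintype V] (hI : IsGeodesicSystem G I) (P : Finset (V × V))
    (x : V) : ∃ T ⊆ P, #{y | ∃ i ∈ P, x ∈ I i.1 i.2 ∧ y ∈ I i.1 i.2 ∧ G.Adj x y} ≤ 2 * #T ∧
      ∀ i ∈ T, ∀ j ∈ T, i ≠ j →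
        x ∈ I i.1 i.2 ∧ x ∈ I j.1 j.2 ∧ ∃ y ∈ I j.1 j.2, G.Adj x y ∧ y ∉ I i.1 i.2 := by
  obtain ⟨T, hTP, hcover, hprivate⟩ := exists_irredundant_cover P
    fun i y ↦ x ∈ I i.1 i.2 ∧ y ∈ I i.1 i.2 ∧ G.Adj x y
  refine ⟨T, hTP, ?_, fun i hi j hj hij ↦ ?_⟩
  · calc
      _ ≤ #(T.biUnion fun i ↦ {y | x ∈ I i.1 i.2 ∧ y ∈ I i.1 i.2 ∧ G.Adj x y}) := by
        refine card_le_card fun y hy ↦ ?_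
        obtain ⟨i, hi, hy⟩ := (mem_filter.1 hy).2
        simpa using hcover i hi y hy
      _ ≤ #T * 2 := card_biUnion_le_card_mul _ _ _ fun i hi ↦ by
        obtain ⟨-, ⟨hx, -⟩, -⟩ := hprivate i hi
        exact (card_le_card (monotone_filter_right _ fun y _ hy ↦ ⟨hy.2.2, hy.2.1⟩)).trans
          (hI.card_neighbors_le_two hx)
      _ = 2 * #T := mul_comm _ _
  · obtain ⟨-, ⟨hxi, -⟩, -⟩ := hprivate i hi
    obtain ⟨y, ⟨hxj, hyj, hxy⟩, hy⟩ := hprivate j hj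
    exact ⟨hxi, hxj, y, hyj, hxy, fun hyi ↦ hij (hy i hi ⟨hxi, hyi, hxy⟩)⟩

lemma ncard_edgeSet_geodesicGraph_le [Finite V] (hI : IsGeodesicSystem G I)
    (P : Finset (V × V)) (X : Finset V) :
    (geodesicGraph G I P X).edgeSet.ncard ≤ 2 * max #X (#P ^ 2) := by
  classical
  have := Fintype.ofFinite V
  choose T hTP hdeg hbranch using hI.exists_card_neighbors_le P
  have hT : ∑ x ∈ X, #(T x) ≤ 2 * max #X (#P ^ 2) := by
    refine sum_card_le_two_mul_max P X T (fun x _ ↦ hTP x) fun i _ j _ hij ↦ ?_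
    refine (card_le_card fun x hx ↦ ?_).trans (hI.card_branch_le_two i.1 i.2 j.1 j.2)
    obtain ⟨-, hi, hj⟩ := mem_filter.1 hx
    simpa using hbranch x i hi j hj hij
  have hdegree : ∑ x, (geodesicGraph G I P X).degree x ≤ ∑ x ∈ X, 2 * #(T x) := by
    rw [← sum_subset (subset_univ X) fun x _ hx ↦ ?_]
    · refine sum_le_sum fun x _ ↦ (card_le_card fun y hy ↦ ?_).trans (hdeg x)
      simpa using ((mem_neighborFinset ..).1 hy).2.2
    · exact (degree_eq_zero_iff_notMem_support ..).2 fun ⟨y, hy⟩ ↦ hx hy.1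
  rw [sum_degrees_eq_twice_card_edges, ← mul_sum] at hdegree
  rw [← coe_edgeFinset, Set.ncard_coe_finset]
  lia

end IsGeodesicSystem

end Counting

section Balls

variable {V : Type*} [Fintype V] {G : SimpleGraph V} {v x : V} {ρ t : ℕ}

open scoped Classical in
/-- The closed ball of radius `ρ` in the graph metric, as a finite set of vertices. -/
noncomputable def closedBall (G : SimpleGraph V) (v : V) (ρ : ℕ) : Finset V :=
  {x | G.edist v x ≤ ρ}

open scoped Classical in
/-- The sphere of radius `t` in the graph metric, as a finite set of vertices. -/
noncomputable def sphere (G : SimpleGraph V) (v : V) (t : ℕ) : Finset V :=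
  {x | G.edist v x = t}

lemma mem_closedBall : x ∈ closedBall G v ρ ↔ G.edist v x ≤ ρ := by
  simp [closedBall]

lemma mem_sphere : x ∈ sphere G v t ↔ G.edist v x = t := by
  simp [sphere]

lemma center_mem_closedBall : v ∈ closedBall G v ρ := by
  simp [mem_closedBall]

lemma exists_mul_card_sphere_le_card_closedBall (G : SimpleGraph V) (v : V) (a : ℕ) {r : ℕ}
    (hr : 0 < r) :
    ∃ t, a < t ∧ t ≤ a + r ∧ r * #(sphere G v t) ≤ #(closedBall G v (a + r)) := by
  classical
  have hdisj : (Ioc a (a + r) : Set ℕ).PairwiseDisjoint (sphere G v) := fun s _ t _ hst ↦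
    disjoint_left.2 fun x hs ht ↦ hst <| by
      simpa only [mem_sphere.1 hs, Nat.cast_inj] using mem_sphere.1 ht
  have hsub : (Ioc a (a + r)).biUnion (sphere G v) ⊆ closedBall G v (a + r) := fun x hx ↦ by
    obtain ⟨t, ht, hx⟩ := mem_biUnion.1 hx
    rw [mem_closedBall, mem_sphere.1 hx]
    exact_mod_cast (mem_Ioc.1 ht).2
  obtain ⟨t, ht, hmin⟩ := (Ioc a (a + r)).exists_min_image (fun t ↦ #(sphere G v t))
    ⟨a + r, by simp [hr]⟩
  refine ⟨t, (mem_Ioc.1 ht).1, (mem_Ioc.1 ht).2, ?_⟩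
  calc r * #(sphere G v t) = #(Ioc a (a + r)) • #(sphere G v t) := by simp
    _ ≤ ∑ t ∈ Ioc a (a + r), #(sphere G v t) := card_nsmul_le_sum _ _ _ hmin
    _ = #((Ioc a (a + r)).biUnion (sphere G v)) := (card_biUnion hdisj).symm
    _ ≤ #(closedBall G v (a + r)) := card_le_card hsub

lemma exists_le_mul_of_le_pow {f : ℕ → ℝ} {A : ℝ} {J : ℕ} (hA : 0 ≤ A) (hJ : J ≠ 0)
    (h₀ : 1 ≤ f 0) (hfJ : f J ≤ A ^ J) : ∃ j < J, f (j + 1) ≤ A * f j := by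
  by_contra! h
  have pow_le (j : ℕ) (hj : j < J) : A ^ j ≤ f j := by
    induction j with
    | zero => simpa using h₀
    | succ j ih => calc
        A ^ (j + 1) = A * A ^ j := pow_succ' A j
        _ ≤ A * f j := by gcongr; exact ih (by lia)
        _ ≤ f (j + 1) := (h j (by lia)).le
  obtain ⟨j, rfl⟩ := Nat.exists_eq_succ_of_ne_zero hJ
  refine hfJ.not_gt ?_
  calc A ^ (j + 1) = A * A ^ j := pow_succ' A j
    _ ≤ A * f j := by gcongr; exact pow_le j j.lt_succ_self
    _ < f (j + 1) := h j j.lt_succ_self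

lemma exists_disjoint_closedBall_covering (G : SimpleGraph V) (r : V → ℕ) :
    ∃ C : Finset V, (C : Set V).PairwiseDisjoint (fun v ↦ closedBall G v (r v)) ∧
      ∀ x, ∃ v ∈ C, G.edist v x ≤ 3 * r v := by
  classical
  obtain ⟨C, -, hdisj, hcover⟩ := Vitali.exists_disjoint_subfamily_covering_enlargement
    (fun v ↦ (closedBall G v (r v) : Set V)) Set.univ (fun v ↦ (r v : ℝ)) 2 one_lt_two
    (fun _ _ ↦ Nat.cast_nonneg _) ((∑ v, r v : ℕ) : ℝ)
    (fun v _ ↦ Nat.cast_le.2 (single_le_sum (fun _ _ ↦ Nat.zero_le _) (mem_univ v)))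
    (fun v _ ↦ ⟨v, center_mem_closedBall⟩)
  refine ⟨C.toFinset, ?_, fun x ↦ ?_⟩
  · rw [Set.coe_toFinset]
    exact fun u hu v hv huv ↦ disjoint_coe.1 (hdisj hu hv huv)
  obtain ⟨v, hv, ⟨z, hxz, hvz⟩, hle⟩ := hcover x (Set.mem_univ x)
  refine ⟨v, Set.mem_toFinset.2 hv, ?_⟩
  rw [mem_coe, mem_closedBall] at hxz hvz
  have hle' : r x ≤ 2 * r v := by exact_mod_cast hle
  calc G.edist v x ≤ G.edist v z + G.edist x z := by
        rw [G.edist_comm (u := x)]; exact G.edist_triangle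
    _ ≤ r v + (2 * r v : ℕ) := by gcongr; exact hxz.trans (by exact_mod_cast hle')
    _ = 3 * r v := by push_cast; ring

lemma exists_clustering (G : SimpleGraph V) (r₀ : ℕ) {b J : ℕ} (hb : 0 < b) {A : ℝ} (hA : 0 ≤ A)
    (hAJ : (Fintype.card V : ℝ) ≤ A ^ (J + 1)) :
    ∃ (C : Finset V) (r : V → ℕ), (∀ v, r₀ ≤ r v) ∧ (∀ v, r v ≤ b ^ J * r₀) ∧
      (∀ x, ∃ v ∈ C, G.edist v x ≤ 3 * r v) ∧
      ((∑ v ∈ C, #(closedBall G v (b * r v)) : ℕ) : ℝ) ≤ A * Fintype.card V := by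
  have hgrowth (v : V) : ∃ j < J + 1, (#(closedBall G v (b ^ (j + 1) * r₀)) : ℝ) ≤
      A * #(closedBall G v (b ^ j * r₀)) :=
    exists_le_mul_of_le_pow (f := fun j ↦ (#(closedBall G v (b ^ j * r₀)) : ℝ)) hA J.succ_ne_zero
      (by exact_mod_cast card_pos.2 ⟨v, center_mem_closedBall⟩)
      ((Nat.cast_le.2 (card_le_univ _)).trans hAJ)
  choose j hj hgrowth using hgrowth
  obtain ⟨C, hdisj, hcover⟩ := exists_disjoint_closedBall_covering G fun v ↦ b ^ j v * r₀
  refine ⟨C, fun v ↦ b ^ j v * r₀, fun v ↦ Nat.le_mul_of_pos_left _ (pow_pos hb _),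
    fun v ↦ Nat.mul_le_mul_right _ (Nat.pow_le_pow_right hb (Nat.lt_succ_iff.1 (hj v))),
    hcover, ?_⟩
  classical
  push_cast
  calc ∑ v ∈ C, (#(closedBall G v (b * (b ^ j v * r₀))) : ℝ)
      ≤ ∑ v ∈ C, A * #(closedBall G v (b ^ j v * r₀)) := sum_le_sum fun v _ ↦ by
        simpa only [pow_succ', mul_assoc] using hgrowth v
    _ = A * #(C.biUnion fun v ↦ closedBall G v (b ^ j v * r₀)) := by
      rw [card_biUnion hdisj, Nat.cast_sum, mul_sum]
    _ ≤ A * Fintype.card V := by gcongr; exact card_le_univ _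

end Balls

section Clusters

variable {V : Type*} {G H : SimpleGraph V} {I : V → V → Set V} {u v a x y : V}

lemma exists_adj_edist_add_one_eq (h : G.Reachable v x) (hne : x ≠ v) :
    ∃ y, G.Adj x y ∧ G.edist v y + 1 = G.edist v x := by
  obtain ⟨p, hp⟩ := h.symm.exists_walk_length_eq_edist
  obtain _ | ⟨hxy, q⟩ := p
  · exact (hne rfl).elim
  · refine ⟨_, hxy, le_antisymm ?_ ?_⟩
    · rw [G.edist_comm (v := x), ← hp, Walk.length_cons, Nat.cast_add_one, G.edist_comm]
      gcongr
      exact edist_le q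
    · rw [← edist_eq_one_iff_adj.2 hxy.symm]
      exact G.edist_triangle

lemma exists_shortestPathTree [Fintype V] (G : SimpleGraph V) (v : V) (ρ : ℕ) :
    ∃ T ≤ G, T.edgeSet.ncard ≤ #(closedBall G v ρ) ∧
      ∀ x, G.edist v x ≤ ρ → T.edist v x ≤ G.edist v x := by
  classical
  have : Nonempty V := ⟨v⟩
  choose! parent hparent using fun (x : V) (h : G.Reachable v x ∧ x ≠ v) ↦
    exists_adj_edist_add_one_eq h.1 h.2
  let E := (closedBall G v ρ).image fun x ↦ s(x, parent x)
  let T := G ⊓ fromEdgeSet (E : Set (Sym2 V))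
  refine ⟨T, inf_le_left, ?_, fun x hx ↦ ?_⟩
  · calc T.edgeSet.ncard ≤ (E : Set (Sym2 V)).ncard := by
          refine Set.ncard_le_ncard ?_ E.finite_toSet
          rw [edgeSet_inf, edgeSet_fromEdgeSet]
          exact Set.inter_subset_right.trans Set.sdiff_subset
      _ ≤ #(closedBall G v ρ) := by
          rw [Set.ncard_coe_finset]
          exact card_image_le
  obtain ⟨n, hn⟩ := ENat.ne_top_iff_exists.1 (ne_top_of_le_ne_top (ENat.natCast_ne_top ρ) hx)
  induction n generalizing x with
  | zero =>
    obtain rfl : v = x := by simpa using hn.symm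
    simp
  | succ n ih =>
    have hreach : G.Reachable v x := edist_ne_top_iff_reachable.1 (hn ▸ ENat.natCast_ne_top _)
    have hne : x ≠ v := by
      rintro rfl
      simp at hn
    obtain ⟨hadj, hdist⟩ := hparent x ⟨hreach, hne⟩
    have hn' : (n : ℕ∞) = G.edist v (parent x) := by
      refine ENat.add_left_injective_of_ne_top ENat.one_ne_top ?_
      simpa only [hdist, Nat.cast_add_one] using hn
    have hT : T.Adj (parent x) x := by
      refine ⟨hadj.symm, (fromEdgeSet_adj _).2 ⟨?_, hadj.ne'⟩⟩
      exact mem_coe.2 (mem_image.2 ⟨x, mem_closedBall.2 hx, Sym2.eq_swap⟩)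
    calc T.edist v x ≤ T.edist v (parent x) + T.edist (parent x) x := T.edist_triangle
      _ ≤ G.edist v (parent x) + 1 :=
        add_le_add (ih _ ((le_self_add.trans_eq hdist).trans hx) hn') (edist_eq_one_iff_adj.2 hT).le
      _ = G.edist v x := hdist

lemma exists_mem_support_edist_eq {t : ℕ} (p : G.Walk x y) (hx : G.edist v x ≤ t)
    (hy : t ≤ G.edist v y) : ∃ z ∈ p.support, G.edist v z = t := by
  induction p with
  | nil => exact ⟨_, by simp, le_antisymm hx hy⟩
  | @cons x z y hxz p ih =>
    obtain hz | hz := le_or_gt (G.edist v z) t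
    · obtain ⟨s, hs, hst⟩ := ih hz hy
      exact ⟨s, by simp [hs], hst⟩
    · refine ⟨x, by simp, le_antisymm hx (Order.le_of_lt_add_one ?_)⟩
      calc (t : ℕ∞) < G.edist v z := hz
        _ ≤ G.edist v x + G.edist x z := G.edist_triangle
        _ = G.edist v x + 1 := by rw [edist_eq_one_iff_adj.2 hxz]

lemma IsGeodesicSystem.exists_mem_edist_eq (hI : IsGeodesicSystem G I) {t : ℕ} (hx : x ∈ I u a)
    (hxt : G.edist v x < t) (hut : t ≤ G.edist v u) :
    ∃ s ∈ I u a, G.edist v s = t ∧ G.dist u s < G.dist u x := by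
  have hux := hI.reachable_left hx
  obtain ⟨p, -, hp⟩ := hI.exists_walk hux
  obtain ⟨s, hs, hst⟩ := exists_mem_support_edist_eq p.reverse hxt.le hut
  replace hs : s ∈ I u x := by simpa [hp] using hs
  have hne : s ≠ x := by
    rintro rfl
    exact hxt.ne hst
  have hpos := ((hI.reachable_left hs).symm.trans hux).pos_dist_of_ne hne
  have hadd := hI.dist_add_dist hs
  exact ⟨s, hI.subset (hI.left_mem (hI.reachable_of_mem hx)) hx hs, hst, by lia⟩

/-- In `H` the geodesics contained in the geodesics of the demand pairs `Q` survive around `v`,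
except possibly those with an end near `v`, for which a detour through `v` is cheap.  The radius of
the cluster of `v` is `3 * r`, and `4 * r` leaves room for an annulus around it. -/
structure IsClusterPreserver (G H : SimpleGraph V) (I : V → V → Set V) (Q : Finset (V × V))
    (v : V) (r : ℕ) : Prop where
  edist_le {x : V} : G.edist v x ≤ 4 * r → H.edist v x ≤ G.edist v x
  adj_or {u a x y : V} : (∃ q ∈ Q, I u a ⊆ I q.1 q.2) → x ∈ I u a → y ∈ I u a → G.Adj x y →
    G.edist v x ≤ 3 * r → H.Adj x y ∨ G.edist v u ≤ 4 * r ∨ G.edist v a ≤ 4 * r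

lemma IsClusterPreserver.mono {K : SimpleGraph V} {Q : Finset (V × V)} {r : ℕ}
    (h : IsClusterPreserver G K I Q v r) (hKH : K ≤ H) : IsClusterPreserver G H I Q v r where
  edist_le hx := (edist_anti hKH).trans (h.edist_le hx)
  adj_or hq hx hy hxy hvx := (h.adj_or hq hx hy hxy hvx).imp_left (@hKH _ _)

/-- The geodesic of the pair `q` meets the cluster of `v`. -/
def Touches (G : SimpleGraph V) (I : V → V → Set V) (v : V) (r : ℕ) (q : V × V) : Prop :=
  ∃ z ∈ I q.1 q.2, G.edist v z ≤ 3 * r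

lemma pow_four_le_of_mul_le {r s M p : ℕ} (hr : 0 < r) (hrs : r * s ≤ M) (hMp : M ≤ p ^ 2)
    (hpr : p ^ 3 ≤ r ^ 2) : s ^ 4 ≤ M := by
  refine Nat.le_of_mul_le_mul_left (?_ : r ^ 4 * s ^ 4 ≤ r ^ 4 * M) (by positivity)
  calc r ^ 4 * s ^ 4 = (r * s) ^ 4 := (mul_pow r s 4).symm
    _ ≤ M ^ 4 := by gcongr
    _ = M ^ 3 * M := pow_succ M 3
    _ ≤ (p ^ 2) ^ 3 * M := by gcongr
    _ = (p ^ 3) ^ 2 * M := by ring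
    _ ≤ (r ^ 2) ^ 2 * M := by gcongr
    _ = r ^ 4 * M := by ring

lemma edist_le_of_adj {ρ ρ' : ℕ} (hx : G.edist v x ≤ ρ) (hxy : G.Adj x y) (hρ : ρ < ρ') :
    G.edist v y ≤ ρ' := calc
  G.edist v y ≤ G.edist v x + G.edist x y := G.edist_triangle
  _ ≤ ρ + 1 := add_le_add hx (edist_eq_one_iff_adj.2 hxy).le
  _ ≤ ρ' := by exact_mod_cast hρ

/-- As both ends are at distance at least `t` from `v`, the geodesic crosses the sphere on either
side of the edge `xy`. -/
lemma IsGeodesicSystem.geodesicGraph_sphere_adj [Fintype V] (hI : IsGeodesicSystem G I) {t : ℕ}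
    {X : Finset V} (hx : x ∈ I u a) (hy : y ∈ I u a) (hxy : G.Adj x y) (hxt : G.edist v x < t)
    (hut : t ≤ G.edist v u) (hat : t ≤ G.edist v a) (hxX : x ∈ X) (hyX : y ∈ X) :
    (geodesicGraph G I (sphere G v t ×ˢ sphere G v t) X).Adj x y := by
  obtain ⟨s, hs, hst, hsx⟩ := hI.exists_mem_edist_eq hx hxt hut
  obtain ⟨s', hs', hst', hxs'⟩ := hI.exists_mem_edist_eq (hI.symm u a ▸ hx) hxt hat
  rw [hI.symm] at hs'
  replace hxs' : G.dist u x < G.dist u s' := by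
    have hx' := hI.dist_add_dist hx
    have hs'' := hI.dist_add_dist hs'
    rw [G.dist_comm, G.dist_comm (u := a)] at hxs'
    lia
  have hdist := hxy.diff_dist_adj (u := u)
  exact ⟨hxX, hyX, (s, s'), mk_mem_product (mem_sphere.2 hst) (mem_sphere.2 hst'),
    hI.mem_of_dist_le hs hs' hx hsx.le hxs'.le,
    hI.mem_of_dist_le hs hs' hy (by lia) (by lia), hxy⟩

open scoped Classical in
lemma IsGeodesicSystem.exists_geodesicGraph_adj_or [Fintype V] (hI : IsGeodesicSystem G I)
    (Q : Finset (V × V)) (v : V) {r p : ℕ} (hr : 0 < r) (hpr : p ^ 3 ≤ r ^ 2)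
    (hQ : #{q ∈ Q | Touches G I v r q} ≤ p) :
    ∃ P : Finset (V × V), #P ^ 2 ≤ #(closedBall G v (4 * r)) ∧
      ∀ {u a x y : V}, (∃ q ∈ Q, I u a ⊆ I q.1 q.2) → x ∈ I u a → y ∈ I u a → G.Adj x y →
        G.edist v x ≤ 3 * r → (geodesicGraph G I P (closedBall G v (4 * r))).Adj x y ∨
          G.edist v u ≤ 4 * r ∨ G.edist v a ≤ 4 * r := by
  have mem_ball {x y : V} (hxy : G.Adj x y) (hx : G.edist v x ≤ 3 * r) :
      x ∈ closedBall G v (4 * r) ∧ y ∈ closedBall G v (4 * r) := by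
    have hx' : G.edist v x ≤ (3 * r : ℕ) := by exact_mod_cast hx
    exact ⟨mem_closedBall.2 (hx'.trans (by exact_mod_cast (by lia))),
      mem_closedBall.2 (edist_le_of_adj hx' hxy (by lia))⟩
  obtain hlight | hheavy := le_total #(closedBall G v (4 * r)) (p ^ 2)
  · obtain ⟨t, htl, htu, ht⟩ := exists_mul_card_sphere_le_card_closedBall G v (3 * r) hr
    rw [show 3 * r + r = 4 * r by ring] at htu ht
    refine ⟨sphere G v t ×ˢ sphere G v t, ?_, fun {u a x y} _ hx hy hxy hvx ↦ ?_⟩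
    · rw [card_product]
      convert pow_four_le_of_mul_le hr ht hlight hpr using 1
      ring
    · by_contra! h
      have hle : (t : ℕ∞) ≤ 4 * r := by exact_mod_cast htu
      have hlt : G.edist v x < t := hvx.trans_lt (by exact_mod_cast htl)
      obtain ⟨hxX, hyX⟩ := mem_ball hxy hvx
      exact h.1 (hI.geodesicGraph_sphere_adj hx hy hxy hlt (hle.trans h.2.1.le)
        (hle.trans h.2.2.le) hxX hyX)
  · refine ⟨{q ∈ Q | Touches G I v r q}, (Nat.pow_le_pow_left hQ 2).trans hheavy, ?_⟩
    rintro u a x y ⟨q, hq, hsub⟩ hx hy hxy hvx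
    obtain ⟨hxX, hyX⟩ := mem_ball hxy hvx
    exact .inl ⟨hxX, hyX, q, mem_filter.2 ⟨hq, x, hsub hx, hvx⟩, hsub hx, hsub hy, hxy⟩

open scoped Classical in
lemma IsGeodesicSystem.exists_isClusterPreserver [Fintype V] (hI : IsGeodesicSystem G I)
    (Q : Finset (V × V)) (v : V) {r p : ℕ} (hr : 0 < r) (hpr : p ^ 3 ≤ r ^ 2)
    (hQ : #{q ∈ Q | Touches G I v r q} ≤ p) :
    ∃ K ≤ G, K.edgeSet.ncard ≤ 3 * #(closedBall G v (4 * r)) ∧ IsClusterPreserver G K I Q v r := by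
  obtain ⟨T, hTG, hTcard, hT⟩ := exists_shortestPathTree G v (4 * r)
  obtain ⟨P, hP, hadj⟩ := hI.exists_geodesicGraph_adj_or Q v hr hpr hQ
  refine ⟨T ⊔ geodesicGraph G I P (closedBall G v (4 * r)), sup_le hTG (geodesicGraph_le _ _), ?_,
    fun hx ↦ (edist_anti le_sup_left).trans (hT _ (by exact_mod_cast hx)),
    fun hq hx hy hxy hvx ↦ (hadj hq hx hy hxy hvx).imp_left .inr⟩
  have hgeo := hI.ncard_edgeSet_geodesicGraph_le P (closedBall G v (4 * r))
  rw [max_eq_left hP] at hgeo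
  rw [edgeSet_sup]
  have hunion := Set.ncard_union_le T.edgeSet
    (geodesicGraph G I P (closedBall G v (4 * r))).edgeSet
  lia

lemma edist_le_length_add {L : ℕ∞} (p : G.Walk u a)
    (hstep : ∀ k < p.length, H.Adj (p.getVert k) (p.getVert (k + 1)) ∨
      H.edist u (p.getVert (k + 1)) ≤ L ∨ H.edist (p.getVert k) a ≤ L) :
    H.edist u a ≤ p.length + 2 * L := by
  by_contra! hlt
  have hprefix (k : ℕ) (hk : k ≤ p.length) : H.edist u (p.getVert k) ≤ k + L := by
    induction k with
    | zero => simp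
    | succ k ih =>
      specialize ih (by lia)
      obtain hadj | hu | ha := hstep k hk
      · calc H.edist u (p.getVert (k + 1))
            ≤ H.edist u (p.getVert k) + H.edist (p.getVert k) (p.getVert (k + 1)) :=
              H.edist_triangle
          _ ≤ k + L + 1 := add_le_add ih (edist_eq_one_iff_adj.2 hadj).le
          _ = (k + 1 : ℕ) + L := by push_cast; ring
      · exact hu.trans le_add_self
      · refine absurd hlt (not_lt_of_ge ?_)
        calc H.edist u a ≤ H.edist u (p.getVert k) + H.edist (p.getVert k) a := H.edist_triangle
          _ ≤ k + L + L := add_le_add ih ha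
          _ = k + 2 * L := by ring
          _ ≤ p.length + 2 * L := by gcongr; lia
  refine hlt.not_ge ?_
  calc H.edist u a = H.edist u (p.getVert p.length) := by rw [Walk.getVert_length]
    _ ≤ p.length + L := hprefix _ le_rfl
    _ ≤ p.length + 2 * L := by gcongr; exact le_mul_of_one_le_left' one_le_two

end Clusters

section Demands

variable {V : Type*} {G H : SimpleGraph V} {I : V → V → Set V} {Q : Finset (V × V)}
  {C : Finset V} {r : V → ℕ} {R : ℕ} {u a v w z : V}

lemma IsGeodesicSystem.edist_le_add_of_isClusterPreserver (hI : IsGeodesicSystem G I)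
    (hr : ∀ v, 0 < r v) (hR : ∀ v, r v ≤ R) (hcover : ∀ x, ∃ v ∈ C, G.edist v x ≤ 3 * r v)
    (hH : ∀ v ∈ C, IsClusterPreserver G H I Q v (r v)) (hua : G.Reachable u a)
    (hQ : ∃ q ∈ Q, I u a ⊆ I q.1 q.2) : H.edist u a ≤ G.edist u a + 16 * R := by
  have detour {v x y : V} (hv : v ∈ C) (hx : G.edist v x ≤ 4 * r v) (hy : G.edist v y ≤ 4 * r v) :
      H.edist x y ≤ 8 * R := calc
    H.edist x y ≤ H.edist v x + H.edist v y := by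
      rw [H.edist_comm (u := v)]; exact H.edist_triangle
    _ ≤ 4 * r v + 4 * r v :=
      add_le_add (((hH v hv).edist_le hx).trans hx) (((hH v hv).edist_le hy).trans hy)
    _ ≤ 8 * R := by exact_mod_cast (by linarith [hR v])
  obtain ⟨p, hlen, hp⟩ := hI.exists_walk hua
  have mem_geodesic (k : ℕ) : p.getVert k ∈ I u a := hp ▸ p.getVert_mem_support k
  calc H.edist u a ≤ p.length + 2 * (8 * R) := edist_le_length_add p fun k hk ↦ by
        obtain ⟨v, hv, hvk⟩ := hcover (p.getVert k)
        have hadj := p.adj_getVert_succ hk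
        have hvk₀ : G.edist v (p.getVert k) ≤ 4 * r v := hvk.trans (by gcongr; norm_num)
        have hvk₁ : G.edist v (p.getVert (k + 1)) ≤ 4 * r v := by
          exact_mod_cast edist_le_of_adj (ρ := 3 * r v) (ρ' := 4 * r v) (by exact_mod_cast hvk)
            hadj (by linarith [hr v])
        exact ((hH v hv).adj_or hQ (mem_geodesic k) (mem_geodesic (k + 1)) hadj hvk).imp_right
          (Or.imp (detour hv · hvk₁) (detour hv hvk₀))
    _ = G.edist u a + 16 * R := by rw [hlen, hua.coe_dist_eq_edist]; ring

lemma IsGeodesicSystem.edist_center_le (hI : IsGeodesicSystem G I)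
    (hfollow : ∀ {u a}, G.Reachable u a → (∃ q ∈ Q, I u a ⊆ I q.1 q.2) →
      H.edist u a ≤ G.edist u a + 16 * R)
    (hH : IsClusterPreserver G H I Q v (r v)) (hR : r v ≤ R)
    (hw : ∃ q ∈ Q, Touches G I v (r v) q ∧ (q.1 = w ∨ q.2 = w)) (hz : G.edist v z ≤ 3 * r v) :
    H.edist w v ≤ G.edist w z + 25 * R := by
  obtain ⟨q, hq, ⟨y, hy, hvy⟩, hwq⟩ := hw
  have hqq := hI.reachable_of_mem hy
  have hwmem : w ∈ I q.1 q.2 := by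
    obtain rfl | rfl := hwq
    exacts [hI.left_mem hqq, hI.right_mem hqq]
  have hvy' : H.edist v y ≤ 3 * r v :=
    (hH.edist_le (hvy.trans (by gcongr; norm_num))).trans hvy
  have hzy : G.edist z y ≤ 3 * r v + 3 * r v := by
    rw [G.edist_comm] at hz
    exact G.edist_triangle.trans (add_le_add hz hvy)
  calc H.edist w v ≤ H.edist w y + H.edist v y := by
        rw [H.edist_comm (u := v)]; exact H.edist_triangle
    _ ≤ (G.edist w y + 16 * R) + 3 * r v :=
      add_le_add (hfollow (hI.reachable hwmem hy) ⟨q, hq, hI.subset hwmem hy⟩) hvy'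
    _ ≤ (G.edist w z + (3 * r v + 3 * r v) + 16 * R) + 3 * r v := by
      gcongr
      exact G.edist_triangle.trans (by gcongr)
    _ ≤ (G.edist w z + (3 * R + 3 * R) + 16 * R) + 3 * R := by gcongr
    _ = G.edist w z + 25 * R := by ring

open scoped Classical in
/-- Buy a pair `q` as long as it makes `q.1` or `q.2` a new end of a bought pair touching `v`, for
every `v` touched by `q`.  Each purchase is paid for by that new end. -/
lemma exists_greedy_pairs {α ι : Type*} (U : Finset α) (C : Finset ι) (touch : ι → α × α → Prop) :
    ∃ Q : Finset (α × α), (∀ v ∈ C, #{q ∈ Q | touch v q} ≤ #U) ∧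
      ∀ u ∈ U, ∀ u' ∈ U, (u, u') ∉ Q → ∃ v ∈ C, touch v (u, u') ∧
        (∃ q ∈ Q, touch v q ∧ (q.1 = u ∨ q.2 = u)) ∧
        ∃ q ∈ Q, touch v q ∧ (q.1 = u' ∨ q.2 = u') := by
  let ends (Q : Finset (α × α)) (v : ι) : Finset α :=
    {w ∈ U | ∃ q ∈ Q, touch v q ∧ (q.1 = w ∨ q.2 = w)}
  have ends_mono {Q Q' : Finset (α × α)} (h : Q ⊆ Q') (v : ι) : ends Q v ⊆ ends Q' v :=
    monotone_filter_right _ fun w _ ⟨q, hq, hqw⟩ ↦ ⟨q, h hq, hqw⟩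
  obtain ⟨Q, hQ⟩ := Finset.exists_maximal
    (s := {Q ∈ (U ×ˢ U).powerset | ∀ v ∈ C, #{q ∈ Q | touch v q} ≤ #(ends Q v)}) ⟨∅, by simp⟩
  obtain ⟨hQU, hQC⟩ := mem_filter.1 hQ.prop
  refine ⟨Q, fun v hv ↦ (hQC v hv).trans (card_filter_le _ _), fun u hu u' hu' hnot ↦ ?_⟩
  by_contra! hnew
  refine hnot (hQ.le_of_ge (mem_filter.2 ⟨?_, fun v hv ↦ ?_⟩) (subset_insert (u, u') Q)
    (mem_insert_self _ _))
  · exact mem_powerset.2 (insert_subset (mk_mem_product hu hu') (mem_powerset.1 hQU))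
  rw [filter_insert]
  split_ifs with htouch
  · have hlt : #(ends Q v) < #(ends (insert (u, u') Q) v) := by
      refine card_lt_card ⟨ends_mono (subset_insert _ _) v, fun hsub ↦ ?_⟩
      have hu_end := hsub (mem_filter.2 ⟨hu, _, mem_insert_self _ _, htouch, .inl rfl⟩)
      have hu'_end := hsub (mem_filter.2 ⟨hu', _, mem_insert_self _ _, htouch, .inr rfl⟩)
      obtain ⟨q, hq, hqv, hqu⟩ := (mem_filter.1 hu'_end).2
      exact (hnew v hv htouch (mem_filter.1 hu_end).2 q hq hqv).elim (by tauto)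
    exact (card_insert_le _ _).trans ((Nat.succ_le_succ (hQC v hv)).trans hlt)
  · exact (hQC v hv).trans (card_le_card (ends_mono (subset_insert _ _) v))

lemma ncard_edgeSet_sup_le {ι : Type*} (C : Finset ι) (K : ι → SimpleGraph V) :
    (C.sup K).edgeSet.ncard ≤ ∑ v ∈ C, (K v).edgeSet.ncard := by
  classical
  induction C using Finset.induction_on with
  | empty => simp
  | insert v C hv ih =>
    rw [sup_insert, sum_insert hv, edgeSet_sup]
    exact (Set.ncard_union_le _ _).trans (Nat.add_le_add_left ih _)

lemma exists_edist_le_add_of_clustering [Fintype V] (G : SimpleGraph V) (U C : Finset V)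
    (hr : ∀ v, 0 < r v) (hUr : ∀ v, #U ^ 3 ≤ r v ^ 2) (hR : ∀ v, r v ≤ R)
    (hcover : ∀ x, ∃ v ∈ C, G.edist v x ≤ 3 * r v) :
    ∃ H ≤ G, H.edgeSet.ncard ≤ 3 * ∑ v ∈ C, #(closedBall G v (4 * r v)) ∧
      ∀ u ∈ U, ∀ u' ∈ U, H.edist u u' ≤ G.edist u u' + 50 * R := by
  obtain ⟨I, hI⟩ := exists_isGeodesicSystem G
  obtain ⟨Q, hQ, hgreedy⟩ := exists_greedy_pairs U C fun v q ↦ Touches G I v (r v) q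
  choose! K hKG hKcard hK using fun v (hv : v ∈ C) ↦
    hI.exists_isClusterPreserver Q v (hr v) (hUr v) (hQ v hv)
  have hH (v : V) (hv : v ∈ C) : IsClusterPreserver G (C.sup K) I Q v (r v) :=
    (hK v hv).mono (le_sup hv)
  refine ⟨C.sup K, Finset.sup_le hKG, ?_, fun u hu u' hu' ↦ ?_⟩
  · rw [mul_sum]
    exact (ncard_edgeSet_sup_le C K).trans (sum_le_sum hKcard)
  by_cases huu' : G.Reachable u u'
  swap
  · simp [edist_eq_top_of_not_reachable huu']
  have hfollow {u a : V} (hua : G.Reachable u a) (h : ∃ q ∈ Q, I u a ⊆ I q.1 q.2) :=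
    hI.edist_le_add_of_isClusterPreserver hr hR hcover hH hua h
  by_cases hmem : (u, u') ∈ Q
  · refine (hfollow huu' ⟨_, hmem, subset_rfl⟩).trans ?_
    gcongr
    norm_num
  obtain ⟨v, hv, ⟨z, hz, hvz⟩, hu_end, hu'_end⟩ := hgreedy u hu u' hu' hmem
  calc (C.sup K).edist u u' ≤ (C.sup K).edist u v + (C.sup K).edist u' v := by
        rw [edist_comm (u := u')]; exact SimpleGraph.edist_triangle
    _ ≤ (G.edist u z + 25 * R) + (G.edist u' z + 25 * R) :=
      add_le_add (hI.edist_center_le hfollow (hH v hv) (hR v) hu_end hvz)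
        (hI.edist_center_le hfollow (hH v hv) (hR v) hu'_end hvz)
    _ = (G.edist u z + G.edist z u') + 50 * R := by rw [edist_comm (u := u')]; ring
    _ = G.edist u u' + 50 * R := by rw [hI.edist_add_edist hz]

end Demands

section Spanners

variable {V : Type*} {G H : SimpleGraph V} {U : Finset V}

/-- `H` is a subset spanner of `G` on `U` with additive error `t`. -/
structure IsSubsetSpanner (G H : SimpleGraph V) (U : Finset V) (t : ℝ) : Prop where
  le : H ≤ G
  reachable {u u' : V} : u ∈ U → u' ∈ U → G.Reachable u u' → H.Reachable u u'
  dist_le {u u' : V} : u ∈ U → u' ∈ U → G.Reachable u u' → (H.dist u u' : ℝ) ≤ G.dist u u' + t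

lemma IsSubsetSpanner.mono {s t : ℝ} (h : IsSubsetSpanner G H U s) (hst : s ≤ t) :
    IsSubsetSpanner G H U t where
  le := h.le
  reachable := h.reachable
  dist_le hu hu' huu' := (h.dist_le hu hu' huu').trans (by gcongr)

lemma isSubsetSpanner_of_edist_le {t : ℕ} (hHG : H ≤ G)
    (h : ∀ u ∈ U, ∀ u' ∈ U, H.edist u u' ≤ G.edist u u' + t) : IsSubsetSpanner G H U t := by
  have reachable {u u' : V} (hu : u ∈ U) (hu' : u' ∈ U) (huu' : G.Reachable u u') :
      H.Reachable u u' :=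
    edist_ne_top_iff_reachable.1 <| ne_top_of_le_ne_top
      (WithTop.add_ne_top.2 ⟨edist_ne_top_iff_reachable.2 huu', ENat.natCast_ne_top t⟩)
      (h u hu u' hu')
  refine ⟨hHG, reachable, fun {u u'} hu hu' huu' ↦ ?_⟩
  have hle := h u hu u' hu'
  rw [← huu'.coe_dist_eq_edist, ← (reachable hu hu' huu').coe_dist_eq_edist] at hle
  exact_mod_cast hle

lemma ncard_edgeSet_le_card_of_isAcyclic [Fintype V] (hG : G.IsAcyclic) :
    G.edgeSet.ncard ≤ Fintype.card V := by
  classical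
  cases isEmpty_or_nonempty V
  · simp [Subsingleton.elim G ⊥]
  obtain ⟨T, hGT, -, hT⟩ := connected_top.exists_isTree_le_of_le_of_isAcyclic le_top hG
  calc G.edgeSet.ncard ≤ T.edgeSet.ncard := Set.ncard_le_ncard (edgeSet_mono hGT)
    _ = #T.edgeFinset := by rw [← coe_edgeFinset, Set.ncard_coe_finset]
    _ ≤ Fintype.card V := by rw [← hT.card_edgeFinset]; exact Nat.le_succ _

lemma exists_forest_isSubsetSpanner [Fintype V] (G : SimpleGraph V) (U : Finset V) :
    ∃ F, F.edgeSet.ncard ≤ Fintype.card V ∧ IsSubsetSpanner G F U (Fintype.card V) := by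
  obtain ⟨F, hFG, hF, hreach⟩ := G.exists_isAcyclic_reachable_eq_le
  refine ⟨F, ncard_edgeSet_le_card_of_isAcyclic hF, hFG, fun _ _ h ↦ hreach ▸ h,
    fun {u u'} _ _ h ↦ ?_⟩
  obtain ⟨p, hp, hlen⟩ := (hreach ▸ h : F.Reachable u u').exists_path_of_dist
  have hdist : F.dist u u' ≤ Fintype.card V := hlen ▸ hp.length_lt.le
  exact_mod_cast hdist.trans le_add_self

lemma exists_pow_le_rpow_and_le_pow {b n ε : ℝ} (hb : 1 < b) (hn : 1 ≤ n) (hε : 0 < ε) :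
    ∃ j : ℕ, b ^ j ≤ n ^ ε ∧ n ≤ (b ^ (1 / ε)) ^ (j + 1) := by
  obtain ⟨j, hj, hj'⟩ := exists_nat_pow_near (Real.one_le_rpow hn hε.le) hb
  refine ⟨j, hj, ?_⟩
  calc n = (n ^ ε) ^ (1 / ε) := by
        rw [← Real.rpow_mul (by positivity), mul_one_div_cancel hε.ne', Real.rpow_one]
    _ ≤ (b ^ (j + 1)) ^ (1 / ε) := by gcongr
    _ = (b ^ (1 / ε)) ^ (j + 1) := (Real.rpow_pow_comm (by positivity) _ _).symm

lemma exists_pow_three_le_sq {k : ℕ} (hk : 1 ≤ k) :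
    ∃ r : ℕ, k ^ 3 ≤ r ^ 2 ∧ (r : ℝ) ≤ 2 * (k : ℝ) ^ (3 / 2 : ℝ) := by
  have hone : 1 ≤ (k : ℝ) ^ (3 / 2 : ℝ) := Real.one_le_rpow (by exact_mod_cast hk) (by norm_num)
  refine ⟨⌈(k : ℝ) ^ (3 / 2 : ℝ)⌉₊, ?_, Nat.ceil_le_two_mul (by linarith)⟩
  have hsq : ((k : ℝ) ^ (3 / 2 : ℝ)) ^ 2 = (k : ℝ) ^ 3 := by
    rw [← Real.rpow_mul_natCast (by positivity), ← Real.rpow_natCast]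
    norm_num
  have hceil : (k : ℝ) ^ 3 ≤ (⌈(k : ℝ) ^ (3 / 2 : ℝ)⌉₊ : ℝ) ^ 2 := by
    rw [← hsq]
    gcongr
    exact Nat.le_ceil _
  exact_mod_cast hceil

lemma exists_clustered_isSubsetSpanner [Fintype V] (G : SimpleGraph V) (U : Finset V) {ε : ℝ}
    (hε : 0 < ε) :
    ∃ H : SimpleGraph V, (H.edgeSet.ncard : ℝ) ≤ 3 * 4 ^ (1 / ε) * Fintype.card V ∧
      IsSubsetSpanner G H U (100 * #U ^ (3 / 2 : ℝ) * Fintype.card V ^ ε) := by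
  obtain rfl | hU := U.eq_empty_or_nonempty
  · refine ⟨⊥, ?_, bot_le, by simp, by simp⟩
    rw [edgeSet_bot, Set.ncard_empty, Nat.cast_zero]
    positivity
  obtain ⟨j, hj, hcard⟩ := exists_pow_le_rpow_and_le_pow (b := 4) (n := Fintype.card V)
    (by norm_num) (by exact_mod_cast hU.card_pos.trans_le (card_le_univ U)) hε
  obtain ⟨r₀, hr₀, hr₀'⟩ := exists_pow_three_le_sq hU.card_pos
  have hpos : 0 < r₀ := by
    have hr₀_sq : 0 < r₀ ^ 2 := (pow_pos hU.card_pos 3).trans_le hr₀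
    exact Nat.pos_of_ne_zero (by rintro rfl; simp at hr₀_sq)
  obtain ⟨C, r, hr, hR, hcover, hsum⟩ :=
    exists_clustering G r₀ (b := 4) (by norm_num) (by positivity) hcard
  obtain ⟨H, hHG, hHcard, hH⟩ := exists_edist_le_add_of_clustering G U C
    (fun v ↦ hpos.trans_le (hr v)) (fun v ↦ hr₀.trans (Nat.pow_le_pow_left (hr v) 2)) hR hcover
  refine ⟨H, ?_, (isSubsetSpanner_of_edist_le (t := 50 * (4 ^ j * r₀)) hHG
    (by exact_mod_cast hH)).mono ?_⟩
  · calc (H.edgeSet.ncard : ℝ) ≤ 3 * (∑ v ∈ C, #(closedBall G v (4 * r v)) : ℕ) := by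
          exact_mod_cast hHcard
      _ ≤ 3 * (4 ^ (1 / ε) * Fintype.card V) := by gcongr
      _ = 3 * 4 ^ (1 / ε) * Fintype.card V := by ring
  · calc ((50 * (4 ^ j * r₀) : ℕ) : ℝ) = 50 * (4 ^ j * r₀) := by push_cast; rfl
      _ ≤ 50 * ((Fintype.card V : ℝ) ^ ε * (2 * #U ^ (3 / 2 : ℝ))) := by gcongr
      _ = 100 * #U ^ (3 / 2 : ℝ) * Fintype.card V ^ ε := by ring

lemma exists_sparse_isSubsetSpanner {ε : ℝ} (hε : 0 < ε) :
    ∃ C₁ C₂ : ℝ, 0 < C₁ ∧ C₁ ≤ 2 ^ (4 / ε) ∧ 0 < C₂ ∧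
      ∀ (V : Type*) [Fintype V] (G : SimpleGraph V) (U : Finset V), ∃ H : SimpleGraph V,
        (H.edgeSet.ncard : ℝ) ≤ C₁ * Fintype.card V ∧
          IsSubsetSpanner G H U (C₂ * #U ^ (3 / 2 : ℝ) * Fintype.card V ^ ε) := by
  obtain hε₁ | hε₁ := le_or_gt 1 ε
  · refine ⟨1, 1, one_pos, Real.one_le_rpow one_le_two (by positivity), one_pos,
      fun V _ G U ↦ ?_⟩
    obtain rfl | hU := U.eq_empty_or_nonempty
    · exact ⟨⊥, by simp, bot_le, by simp, by simp⟩
    have hUone : (1 : ℝ) ≤ #U := by exact_mod_cast hU.card_pos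
    have hUcard : (#U : ℝ) ≤ Fintype.card V := by exact_mod_cast card_le_univ U
    obtain ⟨F, hFcard, hF⟩ := exists_forest_isSubsetSpanner G U
    refine ⟨F, by simpa using hFcard, hF.mono ?_⟩
    calc (Fintype.card V : ℝ) ≤ Fintype.card V ^ ε :=
          Real.self_le_rpow_of_one_le (hUone.trans hUcard) hε₁
      _ ≤ 1 * #U ^ (3 / 2 : ℝ) * Fintype.card V ^ ε := by
        rw [one_mul]
        exact le_mul_of_one_le_left (by positivity) (Real.one_le_rpow hUone (by norm_num))
  · refine ⟨3 * 4 ^ (1 / ε), 100, by positivity, ?_, by norm_num,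
      fun V _ G U ↦ exists_clustered_isSubsetSpanner G U hε⟩
    have hfour : (4 : ℝ) ≤ 4 ^ (1 / ε) :=
      Real.self_le_rpow_of_one_le (by norm_num) ((one_le_div hε).2 hε₁.le)
    calc (3 : ℝ) * 4 ^ (1 / ε) ≤ 4 ^ (1 / ε) * 4 ^ (1 / ε) := by gcongr; linarith
      _ = (2 ^ (4 : ℝ)) ^ (1 / ε) := by
        rw [← Real.mul_rpow (by norm_num) (by norm_num)]
        norm_num
      _ = 2 ^ (4 / ε) := by rw [← Real.rpow_mul zero_le_two, mul_one_div]

end Spanners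

end SubsetSpanner

/-- **Subset additive spanners.**
For every `ε > 0` there are constants `C₁ ≤ 2^(c/ε)` (with `c` an absolute
constant) and `C₂` (depending only on `ε`) such that: for every finite simple
graph `G` on `n` vertices and every subset `U` of its vertices, there is a
subgraph `H ⊆ G` with at most `C₁ · n` edges such that for every pair
`u, u' ∈ U` connected in `G`,
`dist_H(u,u') ≤ dist_G(u,u') + C₂ · |U|^(3/2) · n^ε`. -/
theorem subset_additive_spanner :
    ∃ c : ℝ, 0 < c ∧
      ∀ ε : ℝ, 0 < ε →
        ∃ C₁ C₂ : ℝ, 0 < C₁ ∧ C₁ ≤ (2 : ℝ) ^ (c / ε) ∧ 0 < C₂ ∧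
          ∀ (V : Type) [Fintype V] (G : SimpleGraph V) (U : Finset V),
            ∃ H : SimpleGraph V, H ≤ G ∧
              (H.edgeSet.ncard : ℝ) ≤ C₁ * (Fintype.card V : ℝ) ∧
              ∀ u ∈ U, ∀ u' ∈ U, G.Reachable u u' →
                H.Reachable u u' ∧
                (H.dist u u' : ℝ) ≤ (G.dist u u' : ℝ) +
                  C₂ * (U.card : ℝ) ^ ((3 : ℝ) / 2) * (Fintype.card V : ℝ) ^ ε := by
  refine ⟨4, four_pos, fun ε hε ↦ ?_⟩
  obtain ⟨C₁, C₂, hC₁, hC₁_le, hC₂, hspanner⟩ := SubsetSpanner.exists_sparse_isSubsetSpanner hε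
  refine ⟨C₁, C₂, hC₁, hC₁_le, hC₂, fun V _ G U ↦ ?_⟩
  obtain ⟨H, hcard, hH⟩ := hspanner V G U
  exact ⟨H, hH.le, hcard, fun u hu u' hu' huu' ↦
    ⟨hH.reachable hu hu' huu', hH.dist_le hu hu' huu'⟩⟩
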